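/- Theorem (soundness of the inference encoding): Formula G* is satisfiable — i.e. there exists an assignment v' : V → Bool with φ v' = false and v' i = F i u v' for every i ∈ E — if and only if there exist a nonempty set X ⊆ V \ E and a set W ⊆ V \ (X ∪ E) such that condition AC2 holds for X witnessed by the contingency set W (so that in the witness every effect variable follows its structural equation). -/

import Mathlib

/-!
Given a satisfying assignment `v'` of `G*`, let `X` be the set of variables outside `E` on which
`v'` differs from the actual evaluation `v`, and let the contingency set be everything outside
`X ∪ E`. With these choices AC2 holds, and only `X ≠ ∅` needs an argument: if `X` were empty,
`v` and `v'` would agree outside `E` and both obey the structural equations on `E`, so acyclicity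
would force `v' = v`, contradicting that the effect holds at `v` and not at `v'`.
-/

section CausalModel

variable {V : Type*} {α : V → Type*} {f : ∀ i, (∀ j, α j) → α i} {φ : (∀ i, α i) → Prop}
  {v w w' : ∀ i, α i} {E X W : Set V}

/-- The assignment `w` obeys the structural equations of all variables in `S`. The context is fixed,
so `f i` is the structural equation of `i` as a function of the endogenous variables only; the
variable `i` takes values in its own range `α i`. -/
def FollowsOn (f : ∀ i, (∀ j, α j) → α i) (S : Set V) (w : ∀ i, α i) : Prop :=
  ∀ i ∈ S, w i = f i w

/-- Condition AC2 of actual causality: the effect `φ` disappears once the variables in `X` are moved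
away from their actual values `v`, those in `W` are frozen at them, and all others obey their
structural equations. For Boolean ranges, moving a variable away means negating it. -/
def AC2 (f : ∀ i, (∀ j, α j) → α i) (v : ∀ i, α i) (φ : (∀ i, α i) → Prop) (X W : Set V) : Prop :=
  ∃ v', ¬φ v' ∧ (∀ i ∈ X, v' i ≠ v i) ∧ (∀ i ∈ W, v' i = v i) ∧ FollowsOn f (X ∪ W)ᶜ v'

theorem FollowsOn.eq_of_forall_notMem {r : V → V → Prop} (hwf : WellFounded r)
    (hdep : ∀ i ∈ E, DependsOn (f i) {j | r j i})
    (hw : FollowsOn f E w) (hw' : FollowsOn f E w') (hout : ∀ i ∉ E, w i = w' i) : w = w' := by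
  funext i
  induction i using hwf.induction with
  | _ i ih =>
    by_cases hi : i ∈ E
    · calc
        w i = f i w := hw i hi
        _ = f i w' := hdep i hi ih
        _ = w' i := (hw' i hi).symm
    · exact hout i hi

theorem FollowsOn.nonempty_setOf_ne_sdiff {r : V → V → Prop} (hwf : WellFounded r)
    (hdep : ∀ i ∈ E, DependsOn (f i) {j | r j i})
    (hw : FollowsOn f E w) (hw' : FollowsOn f E w') (hne : w ≠ w') :
    ({i | w i ≠ w' i} \ E).Nonempty := by
  contrapose! hne with hempty
  refine hw.eq_of_forall_notMem hwf hdep hw' fun i hi => ?_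
  by_contra hi_ne
  exact Set.eq_empty_iff_forall_notMem.mp hempty i ⟨hi_ne, hi⟩

theorem FollowsOn.ac2_setOf_ne_sdiff (hw : FollowsOn f E w) (hφw : ¬φ w) :
    AC2 f v φ ({i | w i ≠ v i} \ E) ({i | w i ≠ v i} \ E ∪ E)ᶜ := by
  refine ⟨w, hφw, fun i hi => hi.1, fun i hi => ?_, fun i hi => hw i ?_⟩
  · by_contra hne
    exact hi (Set.subset_sdiff_union _ E hne)
  · by_contra hiE
    exact hi (or_iff_not_imp_left.mpr fun hiX => not_or.mpr ⟨hiX, hiE⟩)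

theorem AC2.exists_followsOn (h : AC2 f v φ X W) (hXE : Disjoint X E) (hWE : Disjoint W E) :
    ∃ w, ¬φ w ∧ FollowsOn f E w := by
  obtain ⟨w, hφw, -, -, hw⟩ := h
  have hE : E ⊆ (X ∪ W)ᶜ := (hXE.sup_left hWE).subset_compl_left
  exact ⟨w, hφw, fun i hi => hw i (hE hi)⟩

theorem inference_encoding_sound_general {r : V → V → Prop} (hwf : WellFounded r)
    (hdep : ∀ i ∈ E, DependsOn (f i) {j | r j i}) (hv : FollowsOn f E v) (hφ : φ v) :
    (∃ w, ¬φ w ∧ FollowsOn f E w) ↔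
      ∃ X W : Set V, X.Nonempty ∧ Disjoint X E ∧ Disjoint W (X ∪ E) ∧ AC2 f v φ X W := by
  constructor
  · rintro ⟨w, hφw, hw⟩
    have hne : w ≠ v := fun h => hφw (h ▸ hφ)
    exact ⟨_, _, hw.nonempty_setOf_ne_sdiff hwf hdep hv hne, Set.disjoint_sdiff_left,
      disjoint_compl_left, hw.ac2_setOf_ne_sdiff hφw⟩
  · rintro ⟨X, W, -, hXE, hWXE, hAC2⟩
    exact hAC2.exists_followsOn hXE (Set.disjoint_union_right.mp hWXE).2

end CausalModel

/-- soundness of the inference encoding: formula `G*` is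
satisfiable iff there are a nonempty cause set `X ⊆ V \ E` and a contingency
set `W ⊆ V \ (X ∪ E)` such that AC2 holds for `X` witnessed by `W`. -/
theorem inference_encoding_sound
    {U V : Type*} [Fintype U] [Fintype V]
    (F : V → (U → Bool) → (V → Bool) → Bool)
    (r : V → V → Prop) (hwf : WellFounded r)
    (hdep : ∀ (i : V) (u : U → Bool) (w w' : V → Bool),
      (∀ j, r j i → w j = w' j) → F i u w = F i u w')
    (u : U → Bool) (v : V → Bool) (hv : ∀ i, v i = F i u v)
    (φ : (V → Bool) → Bool) (hφ : φ v = true)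
    (E : Set V)
    (hE : ∀ a b : V → Bool, (∀ i ∈ E, a i = b i) → φ a = φ b) :
    (∃ v' : V → Bool, φ v' = false ∧ ∀ i ∈ E, v' i = F i u v') ↔
    (∃ X W : Set V, X.Nonempty ∧ X ∩ E = ∅ ∧ W ∩ (X ∪ E) = ∅ ∧
      ∃ v' : V → Bool, φ v' = false ∧
        (∀ i ∈ X, v' i = !(v i)) ∧
        (∀ i ∈ W, v' i = v i) ∧
        (∀ i ∉ X ∪ W, v' i = F i u v')) := by
  simpa only [FollowsOn, AC2, Set.mem_compl_iff, Set.disjoint_iff_inter_eq_empty, Bool.not_eq_true,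
    Bool.eq_not, ne_eq] using inference_encoding_sound_general (f := fun i => F i u)
      (φ := fun w => φ w = true) (E := E) hwf (fun i _ => hdep i u) (fun i _ => hv i) hφ
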